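/- Let F₂ be the free group on two generators a, b, and let H be the subgroup of F₂ generated by {b², bab⁻¹a⁻¹, a³}. Then the cogrowth series of H satisfies the rational identity (1 + z + z² − z³ − 5z⁴ − 13z⁵ − 16z⁶ − 20z⁷ − 12z⁸ − 12z⁹) · Σ_{n≥0} |H_n| zⁿ = 1 + z + 3z² + 3z³ + 5z⁴ + 5z⁵ + 6z⁶ + 6z⁷ + 4z⁸ + 4z⁹ in the ring of formal power series over the rationals. -/

import Mathlib

/-- `|H_n|`: the number of elements of the subgroup `H` of the free group `F₂`
whose reduced word length is `n`. -/
noncomputable def cogrowthCoeff (H : Subgroup (FreeGroup (Fin 2))) (n : ℕ) : ℕ :=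
  Nat.card {g : FreeGroup (Fin 2) // g ∈ H ∧ (FreeGroup.toWord g).length = n}

/-!
Reduced words in `H` are the reduced closed walks at the base vertex of the Stallings graph of `H`,
which has five vertices. Let `W u` be the series counting reduced words from `u` to the base vertex
`t`, and `F x u` the part coming from words whose first letter is `x`. If `x` leads from `u` to `v`,
then deleting the first letter gives `F x u = z (W v - F x⁻¹ v)`, and symmetrically
`F x⁻¹ v = z (W u - F x u)`. Eliminating `F x⁻¹ v` yields `(1 - z²) F x u = z (W v - z W u)`, and
summing over `x` leaves one linear equation for `W` at each vertex. The identity is Cramer's rule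
for this system.
-/

open FreeGroup PowerSeries

section LengthSeries

variable {β : Type*} (R : Type*)

/-- The generating series of a set of words by length. It is meant for finite alphabets, where there
are finitely many words of each length (`Set.ncard` is zero on infinite sets). -/
noncomputable def lengthSeries [Semiring R] (S : Set (List β)) : R⟦X⟧ :=
  PowerSeries.mk fun n => ({L ∈ S | L.length = n}.ncard : R)

lemma lengthSeries_empty [Semiring R] : lengthSeries R (∅ : Set (List β)) = 0 := by
  ext n
  simp [lengthSeries]

lemma lengthSeries_union [Semiring R] [Finite β] {S T : Set (List β)} (hST : Disjoint S T) :
    lengthSeries R (S ∪ T) = lengthSeries R S + lengthSeries R T := by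
  ext n
  have hfin (U : Set (List β)) : {L ∈ U | L.length = n}.Finite :=
    (List.finite_length_eq β n).subset fun _ hL => hL.2
  have hdisj : Disjoint {L ∈ S | L.length = n} {L ∈ T | L.length = n} :=
    hST.mono (Set.sep_subset _ _) (Set.sep_subset _ _)
  have hsep : {L ∈ S ∪ T | L.length = n} = {L ∈ S | L.length = n} ∪ {L ∈ T | L.length = n} :=
    Set.union_inter_distrib_right ..
  simp only [lengthSeries, map_add, coeff_mk]
  rw [hsep, Set.ncard_union_eq hdisj (hfin S) (hfin T), Nat.cast_add]

lemma lengthSeries_image_cons [Semiring R] (x : β) (S : Set (List β)) :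
    lengthSeries R (List.cons x '' S) = X * lengthSeries R S := by
  ext n
  cases n with
  | zero =>
    have hsep : {L ∈ List.cons x '' S | L.length = 0} = ∅ := by
      ext L
      cases L <;> simp
    rw [coeff_zero_X_mul, lengthSeries, coeff_mk, hsep, Set.ncard_empty, Nat.cast_zero]
  | succ n =>
    have hsep : {L ∈ List.cons x '' S | L.length = n + 1} =
        List.cons x '' {L ∈ S | L.length = n} := by
      ext L
      constructor
      · rintro ⟨⟨M, hM, rfl⟩, hlen⟩
        exact ⟨M, ⟨hM, Nat.succ_injective hlen⟩, rfl⟩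
      · rintro ⟨M, ⟨hM, hlen⟩, rfl⟩
        exact ⟨⟨M, hM, rfl⟩, congrArg Nat.succ hlen⟩
    rw [coeff_succ_X_mul, lengthSeries, lengthSeries, coeff_mk, coeff_mk, hsep,
      Set.ncard_image_of_injective _ List.cons_injective]

lemma lengthSeries_eq_add_sum [Semiring R] [Fintype β] (S : Set (List β)) [Decidable ([] ∈ S)] :
    lengthSeries R S = (if [] ∈ S then 1 else 0) + X * ∑ x, lengthSeries R {L | x :: L ∈ S} := by
  ext n
  cases n with
  | zero =>
    have hsep : {L ∈ S | L.length = 0} = if [] ∈ S then {[]} else ∅ := by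
      ext L
      cases L <;> by_cases h : [] ∈ S <;> simp [h]
    rw [map_add, coeff_zero_X_mul, add_zero, lengthSeries, coeff_mk, hsep]
    split_ifs <;> simp
  | succ n =>
    have hsep : {L ∈ S | L.length = n + 1} =
        ⋃ x, List.cons x '' {L | x :: L ∈ S ∧ L.length = n} := by
      ext L
      cases L <;> simp
    have hfin (x : β) : (List.cons x '' {L | x :: L ∈ S ∧ L.length = n}).Finite :=
      ((List.finite_length_eq β n).subset fun _ hL => hL.2).image _
    have hdisj : Pairwise fun x y => Disjoint (List.cons x '' {L | x :: L ∈ S ∧ L.length = n})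
        (List.cons y '' {L | y :: L ∈ S ∧ L.length = n}) := by
      refine fun x y hxy => Set.disjoint_left.2 ?_
      rintro _ ⟨L, -, rfl⟩ ⟨M, -, hM⟩
      exact hxy (List.cons.inj hM).1.symm
    have hcard : {L ∈ S | L.length = n + 1}.ncard =
        ∑ x, {L | x :: L ∈ S ∧ L.length = n}.ncard := by
      simp only [hsep, Set.ncard_iUnion_of_finite hfin hdisj, finsum_eq_sum_of_fintype,
        Set.ncard_image_of_injective _ List.cons_injective]
    have hone : coeff (n + 1) (if [] ∈ S then 1 else 0 : R⟦X⟧) = 0 := by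
      split_ifs <;> simp [coeff_one]
    rw [map_add, hone, zero_add, coeff_succ_X_mul, map_sum, lengthSeries, coeff_mk, hcard,
      Nat.cast_sum]
    simp only [lengthSeries, coeff_mk, Set.mem_ofPred_eq]

lemma mk_cogrowthCoeff_eq_lengthSeries [Semiring R] (H : Subgroup (FreeGroup (Fin 2))) :
    PowerSeries.mk (fun n => (cogrowthCoeff H n : R)) =
      lengthSeries R (toWord '' (H : Set (FreeGroup (Fin 2)))) := by
  ext n
  have hsep : {L ∈ toWord '' (H : Set (FreeGroup (Fin 2))) | L.length = n} =
      toWord '' {g | g ∈ H ∧ g.toWord.length = n} :=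
    (Set.image_inter_preimage toWord (H : Set (FreeGroup (Fin 2))) {L | L.length = n}).symm
  rw [lengthSeries, coeff_mk, coeff_mk, hsep, Set.ncard_image_of_injective _ toWord_injective]
  rfl

end LengthSeries

lemma isReduced_cons_iff {α : Type*} {x : α × Bool} {L : List (α × Bool)} :
    IsReduced (x :: L) ↔ IsReduced L ∧ (x.1, !x.2) ∉ L.head? := by
  cases L with
  | nil => simp
  | cons y L =>
    have hxy : (x.1 = y.1 → x.2 = y.2) ↔ y ≠ (x.1, !x.2) := by
      rw [ne_eq, Prod.ext_iff, Bool.eq_not, not_and_not_right, eq_comm, eq_comm (a := x.2)]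
    rw [isReduced_cons_cons, hxy, and_comm, List.head?_cons, Option.mem_some_iff]

/-- A folded graph in the sense of Stallings: a graph on `V` with edges labelled by `α` in which
every label occurs at most once among the edges leaving, and at most once among the edges entering,
a given vertex. The edges with a given label thus form a partial bijection of `V`. -/
structure FoldedGraph (α V : Type*) where
  /-- The partial bijection given by the edges with label `i`. -/
  edge (i : α) : V ≃. V

namespace FoldedGraph

variable {α V : Type*} (G : FoldedGraph α V)

/-- Traversing an edge labelled by `i`, forwards for `(i, true)` and backwards for `(i, false)`. -/
def step (x : α × Bool) : V ≃. V :=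
  bif x.2 then G.edge x.1 else (G.edge x.1).symm

/-- Following the walk labelled by a word. -/
def walk : List (α × Bool) → V ≃. V
  | [] => PEquiv.refl V
  | x :: L => (G.step x).trans (walk L)

lemma step_not (i : α) (b : Bool) : G.step (i, !b) = (G.step (i, b)).symm := by
  cases b <;> rfl

lemma mem_walk_cons {x : α × Bool} {L : List (α × Bool)} {u v : V} :
    v ∈ G.walk (x :: L) u ↔ ∃ w ∈ G.step x u, v ∈ G.walk L w :=
  PEquiv.mem_trans ..

lemma walk_append (L M : List (α × Bool)) : G.walk (L ++ M) = (G.walk L).trans (G.walk M) := by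
  induction L with
  | nil => exact (PEquiv.refl_trans _).symm
  | cons x L ih => rw [List.cons_append, walk, walk, ih, PEquiv.trans_assoc]

lemma walk_invRev (L : List (α × Bool)) : G.walk (invRev L) = (G.walk L).symm := by
  induction L with
  | nil => rfl
  | cons x L ih =>
    have hx : G.walk (invRev [x]) = (G.step x).symm := by
      rw [← step_not]
      exact PEquiv.trans_refl _
    rw [invRev_cons, walk_append, ih, hx, walk, PEquiv.symm_trans_rev]

lemma walk_le_of_red {L M : List (α × Bool)} (h : Red L M) : G.walk L ≤ G.walk M := by
  induction h with
  | refl => exact le_rfl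
  | tail _ hstep ih =>
    refine ih.trans fun u v hv => ?_
    obtain @⟨L₁, L₂, i, b⟩ := hstep
    rw [walk_append, PEquiv.mem_trans] at hv ⊢
    obtain ⟨w, hL₁, hrest⟩ := hv
    obtain ⟨w₁, hforth, hrest⟩ := G.mem_walk_cons.1 hrest
    obtain ⟨w₂, hback, hL₂⟩ := G.mem_walk_cons.1 hrest
    rw [step_not, PEquiv.mem_iff_mem] at hback
    exact ⟨w, hL₁, (G.step (i, b)).inj hback hforth ▸ hL₂⟩

section LoopSubgroup

variable [DecidableEq α]

/-- The subgroup of the free group consisting of the labels of closed walks at `t`. -/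
def loopSubgroup (t : V) : Subgroup (FreeGroup α) where
  carrier := {g | t ∈ G.walk g.toWord t}
  one_mem' := rfl
  mul_mem' {g h} hg hh := by
    refine G.walk_le_of_red (toWord_mul g h ▸ reduce.red) t t ?_
    rw [walk_append]
    exact (PEquiv.mem_trans ..).2 ⟨t, hg, hh⟩
  inv_mem' {g} hg := by
    rw [Set.mem_ofPred_eq, toWord_inv, walk_invRev]
    exact (PEquiv.mem_iff_mem _).2 hg

lemma mem_loopSubgroup {t : V} {g : FreeGroup α} :
    g ∈ G.loopSubgroup t ↔ t ∈ G.walk g.toWord t :=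
  Iff.rfl

end LoopSubgroup

section SpanningTree

variable {G} {H : Subgroup (FreeGroup α)} {T : V → FreeGroup α}

lemma mul_mk_mul_inv_mem_of_mem_step
    (hT : ∀ i u v, v ∈ G.edge i u → T u * of i * (T v)⁻¹ ∈ H) {x : α × Bool} {u v : V}
    (h : v ∈ G.step x u) : T u * FreeGroup.mk [x] * (T v)⁻¹ ∈ H := by
  obtain ⟨i, _ | _⟩ := x
  · have hinv := inv_mem (hT i v u ((PEquiv.mem_iff_mem _).1 h))
    rwa [mul_inv_rev, mul_inv_rev, inv_inv, ← mul_assoc] at hinv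
  · exact hT i u v h

lemma mul_mk_mul_inv_mem_of_mem_walk
    (hT : ∀ i u v, v ∈ G.edge i u → T u * of i * (T v)⁻¹ ∈ H) {L : List (α × Bool)} {u v : V}
    (h : v ∈ G.walk L u) : T u * FreeGroup.mk L * (T v)⁻¹ ∈ H := by
  induction L generalizing u with
  | nil =>
    obtain rfl : u = v := by simpa [walk] using h
    simp [← one_eq_mk]
  | cons x L ih =>
    obtain ⟨w, hw, hL⟩ := G.mem_walk_cons.1 h
    have hmul := mul_mem (mul_mk_mul_inv_mem_of_mem_step hT hw) (ih hL)
    have hcons : FreeGroup.mk (x :: L) = FreeGroup.mk [x] * FreeGroup.mk L := by simp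
    rw [hcons]
    simpa only [mul_assoc, inv_mul_cancel_left] using hmul

-- With `T u` the label of the path from `t` to `u` in a spanning tree, the elements
-- `T u * of i * (T v)⁻¹` are the Schreier generators of the loop subgroup.
lemma loopSubgroup_le [DecidableEq α]
    (hT : ∀ i u v, v ∈ G.edge i u → T u * of i * (T v)⁻¹ ∈ H) {t : V} (ht : T t = 1) :
    G.loopSubgroup t ≤ H := fun g hg => by
  simpa [ht, mk_toWord] using mul_mk_mul_inv_mem_of_mem_walk hT hg

end SpanningTree

section ReducedWords

/-- The reduced words that label walks from `u` to `t`. -/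
def reducedWords (u t : V) : Set (List (α × Bool)) :=
  {L | IsReduced L ∧ t ∈ G.walk L u}

lemma toWord_image_loopSubgroup [DecidableEq α] (t : V) :
    toWord '' (G.loopSubgroup t : Set (FreeGroup α)) = G.reducedWords t t := by
  ext L
  constructor
  · rintro ⟨g, hg, rfl⟩
    exact ⟨isReduced_toWord, hg⟩
  · rintro ⟨hL, ht⟩
    have hmk : (FreeGroup.mk L).toWord = L := toWord_mk.trans hL.reduce_eq
    exact ⟨FreeGroup.mk L, by rwa [SetLike.mem_coe, mem_loopSubgroup, hmk], hmk⟩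

lemma nil_mem_reducedWords {u t : V} : [] ∈ G.reducedWords u t ↔ u = t := by
  simp [reducedWords, walk]

lemma cons_mem_reducedWords {u v t : V} {x : α × Bool} (h : v ∈ G.step x u)
    {L : List (α × Bool)} :
    x :: L ∈ G.reducedWords u t ↔ L ∈ G.reducedWords v t ∧ (x.1, !x.2) ∉ L.head? := by
  have hwalk : t ∈ G.walk (x :: L) u ↔ t ∈ G.walk L v := by
    rw [mem_walk_cons]
    exact ⟨fun ⟨w, hw, ht⟩ => Option.mem_unique hw h ▸ ht, fun ht => ⟨v, h, ht⟩⟩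
  simp only [reducedWords, Set.mem_ofPred_eq, hwalk, isReduced_cons_iff]
  tauto

lemma reducedWords_eq_union {u v t : V} {x : α × Bool} (h : v ∈ G.step x u) :
    G.reducedWords v t = {L | x :: L ∈ G.reducedWords u t} ∪
      List.cons (x.1, !x.2) '' {L | (x.1, !x.2) :: L ∈ G.reducedWords v t} := by
  ext L
  simp only [Set.mem_union, Set.mem_ofPred_eq, G.cons_mem_reducedWords h]
  cases L <;> grind

/-- The generating series by length of the reduced words that label walks from `u` to `t`. -/
noncomputable def reducedSeries (R : Type*) [Semiring R] (u t : V) : R⟦X⟧ :=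
  lengthSeries R (G.reducedWords u t)

variable (R : Type*)

lemma reducedSeries_eq_add [Semiring R] [Finite α] {u v t : V} {x : α × Bool}
    (h : v ∈ G.step x u) :
    G.reducedSeries R v t = lengthSeries R {L | x :: L ∈ G.reducedWords u t} +
      X * lengthSeries R {L | (x.1, !x.2) :: L ∈ G.reducedWords v t} := by
  have hdisj : Disjoint {L | x :: L ∈ G.reducedWords u t}
      (List.cons (x.1, !x.2) '' {L | (x.1, !x.2) :: L ∈ G.reducedWords v t}) := by
    refine Set.disjoint_right.2 ?_
    rintro _ ⟨L, -, rfl⟩ hL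
    exact ((G.cons_mem_reducedWords h).1 hL).2 rfl
  rw [← lengthSeries_image_cons, ← lengthSeries_union R hdisj, ← G.reducedWords_eq_union h,
    reducedSeries]

lemma one_sub_X_sq_mul_lengthSeries_cons [CommRing R] [Finite α] (x : α × Bool) (u t : V) :
    (1 - X ^ 2) * lengthSeries R {L | x :: L ∈ G.reducedWords u t} =
      (G.step x u).elim 0 fun v => G.reducedSeries R v t - X * G.reducedSeries R u t := by
  cases h : G.step x u with
  | none =>
    have hempty : {L | x :: L ∈ G.reducedWords u t} = ∅ := by
      refine Set.eq_empty_of_forall_notMem fun L hL => ?_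
      obtain ⟨v, hv, -⟩ := G.mem_walk_cons.1 hL.2
      exact Option.some_ne_none v (hv.symm.trans h)
    rw [hempty, lengthSeries_empty, mul_zero, Option.elim_none]
  | some v =>
    have hback : u ∈ G.step (x.1, !x.2) v := by
      rw [step_not]
      exact (PEquiv.mem_iff_mem _).2 h
    have hv := G.reducedSeries_eq_add R (t := t) h
    have hu := G.reducedSeries_eq_add R (t := t) hback
    simp only [Bool.not_not, Prod.mk.eta] at hu
    rw [Option.elim_some]
    linear_combination X * hu - hv

theorem one_sub_X_sq_mul_reducedSeries [CommRing R] [Fintype α] [DecidableEq V] (u t : V) :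
    (1 - X ^ 2) * G.reducedSeries R u t = (if u = t then 1 - X ^ 2 else 0) +
      X * ∑ x, (G.step x u).elim 0 fun v =>
        G.reducedSeries R v t - X * G.reducedSeries R u t := by
  classical
  simp only [← one_sub_X_sq_mul_lengthSeries_cons, ← Finset.mul_sum]
  rw [reducedSeries, lengthSeries_eq_add_sum, mul_add, mul_left_comm]
  simp only [nil_mem_reducedWords, mul_ite, mul_one, mul_zero]

end ReducedWords

end FoldedGraph

/-- The Stallings graph of `⟨b², bab⁻¹a⁻¹, a³⟩`, based at `0`: the `a`-edges are `0 → 2 → 3 → 0` and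
`1 → 4`, the `b`-edges are `0 → 1 → 0` and `2 → 4`. -/
def stallingsGraph : FoldedGraph (Fin 2) (Fin 5) where
  edge := ![
    { toFun := ![some 2, some 4, some 3, some 0, none]
      invFun := ![some 3, none, some 0, some 2, some 1]
      inv := by decide },
    { toFun := ![some 1, some 0, some 4, none, none]
      invFun := ![some 1, some 0, none, none, some 2]
      inv := by decide }]

lemma loopSubgroup_stallingsGraph :
    stallingsGraph.loopSubgroup 0 = Subgroup.closure
      {of 1 ^ 2, of 1 * of 0 * (of 1)⁻¹ * (of 0)⁻¹, of 0 ^ 3} := by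
  apply le_antisymm
  · let T : Fin 5 → FreeGroup (Fin 2) := ![1, of 1, of 0, of 0 ^ 2, of 0 * of 1]
    have schreier_generators : ∀ i u v, v ∈ stallingsGraph.edge i u → T u * of i * (T v)⁻¹ ∈
        ({1, of 1 ^ 2, of 1 * of 0 * (of 1)⁻¹ * (of 0)⁻¹, of 0 ^ 3} :
          Finset (FreeGroup (Fin 2))) := by
      decide
    refine FoldedGraph.loopSubgroup_le (T := T) (fun i u v h => ?_) rfl
    obtain h | h := Finset.mem_insert.1 (schreier_generators i u v h)
    · exact h ▸ one_mem _
    · exact Subgroup.subset_closure (by simpa using h)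
  · rw [Subgroup.closure_le]
    rintro g (rfl | rfl | rfl) <;> exact (FoldedGraph.mem_loopSubgroup _).2 (by decide)

theorem example_cogrowth_identity_F2_general (R : Type*) [CommRing R]
    {H : Subgroup (FreeGroup (Fin 2))}
    (hH : H = Subgroup.closure {of 1 ^ 2, of 1 * of 0 * (of 1)⁻¹ * (of 0)⁻¹, of 0 ^ 3}) :
    (1 + X + X ^ 2 - X ^ 3 - 5 * X ^ 4 - 13 * X ^ 5 - 16 * X ^ 6 - 20 * X ^ 7
          - 12 * X ^ 8 - 12 * X ^ 9) * PowerSeries.mk (fun n => (cogrowthCoeff H n : R)) =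
      1 + X + 3 * X ^ 2 + 3 * X ^ 3 + 5 * X ^ 4 + 5 * X ^ 5 + 6 * X ^ 6
        + 6 * X ^ 7 + 4 * X ^ 8 + 4 * X ^ 9 := by
  rw [hH, ← loopSubgroup_stallingsGraph, mk_cogrowthCoeff_eq_lengthSeries,
    FoldedGraph.toWord_image_loopSubgroup]
  let W (u : Fin 5) : R⟦X⟧ := stallingsGraph.reducedSeries R u 0
  change _ * W 0 = _
  have vertex (u : Fin 5) := stallingsGraph.one_sub_X_sq_mul_reducedSeries R u 0
  simp only [Fintype.sum_prod_type, Fin.sum_univ_two, Fintype.sum_bool] at vertex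
  -- The summands belong to `a`, `a⁻¹`, `b`, `b⁻¹`, in this order, with `0` for a missing edge.
  have vertex_zero : (1 - X ^ 2) * W 0 = (1 - X ^ 2) + X * (W 2 - X * W 0 + (W 3 - X * W 0)
      + (W 1 - X * W 0 + (W 1 - X * W 0))) := vertex 0
  have vertex_one : (1 - X ^ 2) * W 1 = 0 + X * (W 4 - X * W 1 + 0
      + (W 0 - X * W 1 + (W 0 - X * W 1))) := vertex 1
  have vertex_two : (1 - X ^ 2) * W 2 = 0 + X * (W 3 - X * W 2 + (W 0 - X * W 2)
      + (W 4 - X * W 2 + 0)) := vertex 2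
  have vertex_three : (1 - X ^ 2) * W 3 = 0 + X * (W 0 - X * W 3 + (W 2 - X * W 3)
      + (0 + 0)) := vertex 3
  have vertex_four : (1 - X ^ 2) * W 4 = 0 + X * (0 + (W 1 - X * W 4)
      + (0 + (W 2 - X * W 4))) := vertex 4
  have isUnit_one_sub_X : IsUnit (1 - X : R⟦X⟧) := by simp [isUnit_iff_constantCoeff]
  refine isUnit_one_sub_X.mul_left_cancel ?_
  -- The determinant of the system is `1 - X` times the claimed denominator. The coefficients are
  -- the cofactors of its first column.
  linear_combination (1 + 3 * X ^ 2 + 5 * X ^ 4 + 6 * X ^ 6 + 4 * X ^ 8) * vertex_zero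
    + (2 * X + 5 * X ^ 3 + X ^ 4 + 7 * X ^ 5 + 4 * X ^ 7) * vertex_one
    + (X + X ^ 2 + 5 * X ^ 3 + 2 * X ^ 4 + 6 * X ^ 5 + 2 * X ^ 6 + 2 * X ^ 7) * vertex_two
    + (X + X ^ 2 + 3 * X ^ 3 + 4 * X ^ 4 + 4 * X ^ 5 + 2 * X ^ 6 + 4 * X ^ 7) * vertex_three
    + (3 * X ^ 2 + X ^ 3 + 7 * X ^ 4 + 2 * X ^ 5 + 6 * X ^ 6) * vertex_four

/-- For the subgroup `H = ⟨b², bab⁻¹a⁻¹, a³⟩` of `F₂` (with `a = of 0`, `b = of 1`),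
the cogrowth series satisfies
`(1 + z + z² − z³ − 5z⁴ − 13z⁵ − 16z⁶ − 20z⁷ − 12z⁸ − 12z⁹)·H(z)
  = 1 + z + 3z² + 3z³ + 5z⁴ + 5z⁵ + 6z⁶ + 6z⁷ + 4z⁸ + 4z⁹` in `ℚ⟦z⟧`. -/
theorem example_cogrowth_identity_F2 (H : Subgroup (FreeGroup (Fin 2)))
    (hH : H = Subgroup.closure
      {FreeGroup.of 1 ^ 2,
        FreeGroup.of 1 * FreeGroup.of 0 * (FreeGroup.of 1)⁻¹ * (FreeGroup.of 0)⁻¹,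
        FreeGroup.of 0 ^ 3}) :
    (1 + PowerSeries.X + PowerSeries.X ^ 2 - PowerSeries.X ^ 3 - 5 * PowerSeries.X ^ 4
          - 13 * PowerSeries.X ^ 5 - 16 * PowerSeries.X ^ 6 - 20 * PowerSeries.X ^ 7
          - 12 * PowerSeries.X ^ 8 - 12 * PowerSeries.X ^ 9) *
        PowerSeries.mk (fun n => (cogrowthCoeff H n : ℚ)) =
      1 + PowerSeries.X + 3 * PowerSeries.X ^ 2 + 3 * PowerSeries.X ^ 3
        + 5 * PowerSeries.X ^ 4 + 5 * PowerSeries.X ^ 5 + 6 * PowerSeries.X ^ 6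
        + 6 * PowerSeries.X ^ 7 + 4 * PowerSeries.X ^ 8 + 4 * PowerSeries.X ^ 9 :=
  example_cogrowth_identity_F2_general ℚ hH
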